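/- Let a, b, b', c be complex numbers with c not a nonpositive integer, and let x, y be real numbers with |x| < 1 and |y| < 1 such that |x/(x−1)| < 1 and |y/(y−1)| < 1. Then F₁(a; b, b'; c; x, y) = (1−x)^{−b} (1−y)^{−b'} · F₁(c−a; b, b'; c; x/(x−1), y/(y−1)). -/

import Mathlib

noncomputable def poch (a : ℂ) (n : ℕ) : ℂ := ∏ i ∈ Finset.range n, (a + i)

/-- Appell series F₁(a;b,b';c;x,y). -/
noncomputable def appellF1 (a b b' c x y : ℂ) : ℂ :=
  ∑' p : ℕ × ℕ, poch a (p.1 + p.2) * poch b p.1 * poch b' p.2 /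
    (p.1.factorial * p.2.factorial * poch c (p.1 + p.2)) * x ^ p.1 * y ^ p.2

/-!
Expanding `(1 - x) ^ (-b) * (x / (x - 1)) ^ i = (-x) ^ i * (1 - x) ^ (-(b + i))` in powers of `x`,
and likewise in `y`, turns the right-hand side into a quadruple series. It converges absolutely for
`‖x‖, ‖y‖ < 1 / 2`, so it may be regrouped by powers of `x` and `y`; the coefficient ratio
`(c - a)ₛ / (c)ₛ`, `s = i + j`, is thereby replaced by its finite difference of order `m + n` at
`s = 0` up to sign, which is `(a)_{m + n} / (c)_{m + n}` by the Chu–Vandermonde identity.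

The identity then extends by analytic continuation in the single variable `t ↦ (t x, t y)`: the
points `z` of the unit disc with `‖z / (z - 1)‖ < 1` are those with `re z < 1 / 2`, so the domain of
`t` is convex.
-/

open Topology Finset Metric
open scoped Nat NNReal

lemma poch_zero (a : ℂ) : poch a 0 = 1 := prod_range_zero _

lemma poch_succ (a : ℂ) (n : ℕ) : poch a (n + 1) = poch a n * (a + n) := prod_range_succ _ n

lemma poch_add (a : ℂ) (m n : ℕ) : poch a (m + n) = poch a m * poch (a + m) n := by
  simp [poch, prod_range_add, add_assoc]

lemma poch_ne_zero {c : ℂ} (hc : ∀ n : ℕ, c ≠ -(n : ℂ)) (n : ℕ) : poch c n ≠ 0 :=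
  prod_ne_zero_iff.2 fun i _ => mt eq_neg_of_add_eq_zero_left (hc i)

lemma poch_eq_eval_ascPochhammer (a : ℂ) (n : ℕ) : poch a n = (ascPochhammer ℂ n).eval a := by
  induction n with
  | zero => simp [poch_zero]
  | succ n ih => rw [poch_succ, ascPochhammer_succ_eval, ih]

lemma poch_div_factorial (a : ℂ) (n : ℕ) : poch a n / n ! = Ring.choose (a + n - 1) n := by
  rw [← Ring.multichoose_eq, div_eq_iff (Nat.cast_ne_zero.2 n.factorial_ne_zero),
    poch_eq_eval_ascPochhammer, ← Polynomial.ascPochhammer_smeval_eq_eval,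
    ← Ring.factorial_nsmul_multichoose_eq_ascPochhammer, nsmul_eq_mul, mul_comm]

lemma ordinaryHypergeometricCoefficient_one (a c : ℂ) (n : ℕ) :
    ordinaryHypergeometricCoefficient a 1 c n = poch a n / poch c n := by
  have : (n ! : ℂ) ≠ 0 := Nat.cast_ne_zero.2 n.factorial_ne_zero
  simp only [ordinaryHypergeometricCoefficient, ascPochhammer_eval_one,
    poch_eq_eval_ascPochhammer]
  field_simp

lemma one_le_radius_ordinaryHypergeometricSeries {c : ℂ} (hc : ∀ n : ℕ, c ≠ -(n : ℂ)) (a : ℂ) :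
    1 ≤ (ordinaryHypergeometricSeries ℂ a 1 c).radius := by
  by_cases ha : ∃ k : ℕ, a = -(k : ℂ)
  · obtain ⟨k, rfl⟩ := ha
    simp [ordinaryHypergeometric_radius_top_of_neg_nat₁]
  · refine (ordinaryHypergeometricSeries_radius_eq_one ℂ a 1 c fun k => ⟨?_, ?_, ?_⟩).ge
    · exact fun h => ha ⟨k, by rw [h, neg_neg]⟩
    · exact fun h => k.cast_add_one_ne_zero (R := ℂ) (by rw [h]; ring)
    · exact fun h => hc k (by rw [h, neg_neg])

lemma exists_norm_poch_div_poch_le {c : ℂ} (hc : ∀ n : ℕ, c ≠ -(n : ℂ)) (a : ℂ) {ρ : ℝ}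
    (hρ : 1 < ρ) : ∃ C, ∀ n, ‖poch a n / poch c n‖ ≤ C * ρ ^ n := by
  lift ρ to ℝ≥0 using by positivity
  have hρ_lt : (ρ⁻¹ : ℝ≥0) < (ordinaryHypergeometricSeries ℂ a 1 c).radius :=
    lt_of_lt_of_le (by exact_mod_cast inv_lt_one_of_one_lt₀ hρ)
      (one_le_radius_ordinaryHypergeometricSeries hc a)
  obtain ⟨C, -, hC⟩ := FormalMultilinearSeries.norm_mul_pow_le_of_lt_radius _ hρ_lt
  refine ⟨C, fun n => ?_⟩
  have h := hC n
  rwa [ordinaryHypergeometricSeries, FormalMultilinearSeries.ofScalars_norm,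
    ordinaryHypergeometricCoefficient_one, NNReal.coe_inv, inv_pow, ← div_eq_mul_inv,
    div_le_iff₀ (by positivity)] at h

/-- The `n`-th term of the binomial series of `(1 - x) ^ (-b)`. -/
noncomputable def binomialTerm (b x : ℂ) (n : ℕ) : ℂ := poch b n / n ! * x ^ n

lemma hasSum_binomialTerm (b : ℂ) {x : ℂ} (hx : ‖x‖ < 1) :
    HasSum (binomialTerm b x) ((1 - x) ^ (-b)) := by
  have h := (Complex.one_div_one_sub_cpow_hasFPowerSeriesOnBall_zero b).hasSum (y := x)
    (by simpa [← ofReal_norm] using hx)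
  unfold binomialTerm
  simpa [FormalMultilinearSeries.ofScalars_apply_eq, ← poch_div_factorial, Complex.cpow_neg,
    mul_comm] using h

lemma binomialTerm_ofReal_mul (b x : ℂ) (s : ℝ) (n : ℕ) :
    binomialTerm b (s * x) n = s ^ n * binomialTerm b x n := by
  rw [binomialTerm, binomialTerm, mul_pow, mul_left_comm]

lemma norm_binomialTerm_le_of_norm_le (b : ℂ) {x z : ℂ} (h : ‖x‖ ≤ ‖z‖) (n : ℕ) :
    ‖binomialTerm b x n‖ ≤ ‖binomialTerm b z n‖ := by
  simp only [binomialTerm, norm_mul, norm_pow]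
  gcongr

lemma summable_pow_mul_norm_binomialTerm (b : ℂ) {x : ℂ} {s : ℝ} (hs : 0 ≤ s)
    (hsx : s * ‖x‖ < 1) : Summable fun n => s ^ n * ‖binomialTerm b x n‖ := by
  have hnorm : ‖(s : ℂ) * x‖ < 1 := by simpa [abs_of_nonneg hs] using hsx
  simpa [binomialTerm_ofReal_mul, abs_of_nonneg hs] using
    (hasSum_binomialTerm b hnorm).summable.norm

lemma exists_one_lt_and_mul_lt_one {s t : ℝ} (hs : s < 1) (ht : t < 1) :
    ∃ ρ > 1, ρ * s < 1 ∧ ρ * t < 1 := by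
  have eventually_mul_lt {u : ℝ} (hu : u < 1) : ∀ᶠ ρ : ℝ in 𝓝[>] 1, ρ * u < 1 :=
    ((continuous_mul_const u).continuousAt.eventually_lt_const (by simpa using hu)).filter_mono
      nhdsWithin_le_nhds
  exact (eventually_mem_nhdsWithin.and ((eventually_mul_lt hs).and (eventually_mul_lt ht))).exists

/-- The `p`-th term of the Appell series F₁(a;b,b';c;x,y). -/
noncomputable def appellTerm (a b b' c x y : ℂ) (p : ℕ × ℕ) : ℂ :=
  poch a (p.1 + p.2) / poch c (p.1 + p.2) * (binomialTerm b x p.1 * binomialTerm b' y p.2)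

lemma appellF1_eq_tsum_appellTerm (a b b' c x y : ℂ) :
    appellF1 a b b' c x y = ∑' p, appellTerm a b b' c x y p :=
  tsum_congr fun p => by
    simp only [appellTerm, binomialTerm, div_eq_mul_inv, mul_inv]
    ring

lemma norm_appellTerm_le_of_norm_le (a b b' c : ℂ) {x y z w : ℂ} (hx : ‖x‖ ≤ ‖z‖)
    (hy : ‖y‖ ≤ ‖w‖) (p : ℕ × ℕ) :
    ‖appellTerm a b b' c x y p‖ ≤ ‖appellTerm a b b' c z w p‖ := by
  simp only [appellTerm, norm_mul]
  gcongr <;> apply norm_binomialTerm_le_of_norm_le <;> assumption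

lemma summable_appellTerm {c : ℂ} (hc : ∀ n : ℕ, c ≠ -(n : ℂ)) (a b b' : ℂ) {x y : ℂ}
    (hx : ‖x‖ < 1) (hy : ‖y‖ < 1) : Summable (appellTerm a b b' c x y) := by
  obtain ⟨ρ, hρ, hρx, hρy⟩ := exists_one_lt_and_mul_lt_one hx hy
  obtain ⟨C, hC⟩ := exists_norm_poch_div_poch_le hc a hρ
  have hmajorant := (summable_pow_mul_norm_binomialTerm b (by positivity) hρx).mul_of_nonneg
    (summable_pow_mul_norm_binomialTerm b' (by positivity) hρy)
    (fun _ => by positivity) (fun _ => by positivity)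
  refine .of_norm_bounded (hmajorant.mul_left C) fun p => ?_
  calc ‖appellTerm a b b' c x y p‖
      = ‖poch a (p.1 + p.2) / poch c (p.1 + p.2)‖ *
          (‖binomialTerm b x p.1‖ * ‖binomialTerm b' y p.2‖) := by
        rw [appellTerm, norm_mul, norm_mul]
    _ ≤ C * ρ ^ (p.1 + p.2) * (‖binomialTerm b x p.1‖ * ‖binomialTerm b' y p.2‖) := by
        gcongr
        exact hC _
    _ = C * (ρ ^ p.1 * ‖binomialTerm b x p.1‖ * (ρ ^ p.2 * ‖binomialTerm b' y p.2‖)) := by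
        ring

lemma differentiableOn_appellF1_comp {c : ℂ} (hc : ∀ n : ℕ, c ≠ -(n : ℂ)) (a b b' : ℂ)
    {f g : ℂ → ℂ} {U : Set ℂ} (hU : IsOpen U) (hf : DifferentiableOn ℂ f U)
    (hg : DifferentiableOn ℂ g U) (hf1 : Set.MapsTo f U (ball 0 1))
    (hg1 : Set.MapsTo g U (ball 0 1)) :
    DifferentiableOn ℂ (fun t => appellF1 a b b' c (f t) (g t)) U := by
  intro t ht
  obtain ⟨r, hfr, hr⟩ := exists_between (mem_ball_zero_iff.1 (hf1 ht))
  obtain ⟨s, hgs, hs⟩ := exists_between (mem_ball_zero_iff.1 (hg1 ht))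
  have hr_norm : ‖(r : ℂ)‖ = r := Complex.norm_of_nonneg ((norm_nonneg _).trans hfr.le)
  have hs_norm : ‖(s : ℂ)‖ = s := Complex.norm_of_nonneg ((norm_nonneg _).trans hgs.le)
  let V : Set ℂ := (U ∩ f ⁻¹' ball 0 r) ∩ (U ∩ g ⁻¹' ball 0 s)
  have hV : IsOpen V := (hf.continuousOn.isOpen_inter_preimage hU isOpen_ball).inter
    (hg.continuousOn.isOpen_inter_preimage hU isOpen_ball)
  have hVU : V ⊆ U := fun _ hw => hw.1.1
  have htV : t ∈ V := by simp [V, ht, hfr, hgs]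
  have hdiff : DifferentiableOn ℂ (fun t => ∑' p, appellTerm a b b' c (f t) (g t) p) V := by
    refine Complex.differentiableOn_tsum_of_summable_norm
      (summable_appellTerm hc a b b' (hr_norm.trans_lt hr) (hs_norm.trans_lt hs)).norm
      (fun p => ?_) hV fun p w hw => norm_appellTerm_le_of_norm_le a b b' c ?_ ?_ p
    · exact (((hf.mono hVU).pow _).const_mul _ |>.mul
        (((hg.mono hVU).pow _).const_mul _)).const_mul _
    · exact hr_norm.symm ▸ (mem_ball_zero_iff.1 hw.1.2).le
    · exact hs_norm.symm ▸ (mem_ball_zero_iff.1 hw.2.2).le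
  simp only [appellF1_eq_tsum_appellTerm]
  exact (hdiff.differentiableAt (hV.mem_nhds htV)).differentiableWithinAt

lemma fwdDiff_iter_poch_div_poch {c : ℂ} (hc : ∀ n : ℕ, c ≠ -(n : ℂ)) (a : ℂ) (n : ℕ) :
    (fwdDiff 1)^[n] (fun s => poch (c - a) s / poch c s) =
      fun s => (-1) ^ n * poch a n * (poch (c - a) s / poch c (s + n)) := by
  induction n with
  | zero => simp [poch_zero]
  | succ n ih =>
    funext s
    have hpoch := poch_ne_zero hc (s + n)
    have hlast : c + ((s + n : ℕ) : ℂ) ≠ 0 := mt eq_neg_of_add_eq_zero_left (hc _)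
    rw [Function.iterate_succ_apply', ih, fwdDiff, add_right_comm s 1 n, ← add_assoc s n 1,
      poch_succ, poch_succ, poch_succ]
    field_simp
    push_cast
    ring

/-- The double binomial transform of `v`: its `(m, n)` entry is
`∑ i ≤ m, ∑ j ≤ n, (-1) ^ (i + j) * (m choose i) * (n choose j) * v i j`. -/
noncomputable def binomialTransform₂ (v : ℕ → ℕ → ℂ) (m n : ℕ) : ℂ :=
  ∑ p ∈ antidiagonal m, ∑ q ∈ antidiagonal n,
    (-1) ^ p.1 * (m.choose p.1) * ((-1) ^ q.1 * (n.choose q.1)) * v p.1 q.1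

lemma sum_antidiagonal_neg_one_pow_mul_choose (f : ℕ → ℂ) (n s : ℕ) :
    ∑ p ∈ antidiagonal n, (-1) ^ p.1 * (n.choose p.1 : ℂ) * f (s + p.1) =
      (-1) ^ n * (fwdDiff 1)^[n] f s := by
  rw [Nat.sum_antidiagonal_eq_sum_range_succ_mk, fwdDiff_iter_eq_sum_shift, mul_sum]
  refine sum_congr rfl fun k hk => ?_
  have hkn : k ≤ n := Nat.lt_succ_iff.1 (mem_range.1 hk)
  have hsign : (-1 : ℂ) ^ k = (-1) ^ n * (-1) ^ (n - k) := by
    rw [← pow_sub_mul_pow (-1 : ℂ) hkn, mul_right_comm, ← mul_pow]; simp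
  simp [hsign, mul_assoc]

lemma binomialTransform₂_comp_add (f : ℕ → ℂ) (m n : ℕ) :
    binomialTransform₂ (fun i j => f (i + j)) m n = (-1) ^ (m + n) * (fwdDiff 1)^[m + n] f 0 := by
  calc binomialTransform₂ (fun i j => f (i + j)) m n
      = ∑ p ∈ antidiagonal m, (-1) ^ p.1 * (m.choose p.1 : ℂ) *
          ∑ q ∈ antidiagonal n, (-1) ^ q.1 * (n.choose q.1 : ℂ) * f (p.1 + q.1) := by
        simp only [binomialTransform₂, mul_sum, mul_assoc]
    _ = (-1) ^ n * ∑ p ∈ antidiagonal m,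
          (-1) ^ p.1 * (m.choose p.1 : ℂ) * (fwdDiff 1)^[n] f (0 + p.1) := by
        simp only [sum_antidiagonal_neg_one_pow_mul_choose, zero_add, mul_sum, mul_left_comm]
    _ = (-1) ^ (m + n) * (fwdDiff 1)^[m + n] f 0 := by
        rw [sum_antidiagonal_neg_one_pow_mul_choose, Function.iterate_add_apply]
        ring

lemma binomialTransform₂_poch_div_poch {c : ℂ} (hc : ∀ n : ℕ, c ≠ -(n : ℂ)) (a : ℂ) (m n : ℕ) :
    binomialTransform₂ (fun i j => poch (c - a) (i + j) / poch c (i + j)) m n =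
      poch a (m + n) / poch c (m + n) := by
  have hsign : (-1 : ℂ) ^ (m + n) * (-1) ^ (m + n) = 1 := by rw [← mul_pow]; simp
  rw [binomialTransform₂_comp_add (fun s => poch (c - a) s / poch c s),
    fwdDiff_iter_poch_div_poch hc]
  simp only [poch_zero, zero_add, ← mul_assoc, hsign, one_mul]
  rw [mul_one_div]

/-- The term indexed by `p = (i, k)` of the double series obtained by expanding
`(1 - x) ^ (-b) * binomialTerm b (x / (x - 1)) i = (poch b i / i !) (-x) ^ i (1 - x) ^ (-(b + i))`
in powers of `x`. -/
noncomputable def eulerKernel (b x : ℂ) (p : ℕ × ℕ) : ℂ :=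
  poch b (p.1 + p.2) / (p.1 ! * p.2 !) * (-1) ^ p.1 * x ^ (p.1 + p.2)

lemma one_sub_cpow_mul_div_pow (b : ℂ) {x : ℂ} (hx : x ≠ 1) (i : ℕ) :
    (1 - x) ^ (-b) * (x / (x - 1)) ^ i = (-x) ^ i * (1 - x) ^ (-(b + i)) := by
  have h : 1 - x ≠ 0 := sub_ne_zero.2 hx.symm
  rw [neg_add, ← sub_eq_add_neg, Complex.cpow_sub _ _ h, Complex.cpow_natCast,
    ← neg_div_neg_eq, neg_sub, div_pow]
  ring

lemma hasSum_eulerKernel (b : ℂ) {x : ℂ} (hx : ‖x‖ < 1) (i : ℕ) :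
    HasSum (fun k => eulerKernel b x (i, k))
      ((1 - x) ^ (-b) * binomialTerm b (x / (x - 1)) i) := by
  have hx1 : x ≠ 1 := by rintro rfl; simp at hx
  have hsum : (1 - x) ^ (-b) * binomialTerm b (x / (x - 1)) i =
      poch b i / i ! * (-x) ^ i * (1 - x) ^ (-(b + i)) := by
    rw [binomialTerm, mul_left_comm, one_sub_cpow_mul_div_pow b hx1, mul_assoc]
  rw [hsum]
  refine ((hasSum_binomialTerm (b + i) hx).mul_left (poch b i / i ! * (-x) ^ i)).congr_fun ?_
  intro k
  simp only [eulerKernel, binomialTerm, poch_add, pow_add, neg_pow x, div_eq_mul_inv, mul_inv]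
  ring

lemma eulerKernel_eq_of_mem_antidiagonal (b x : ℂ) {p : ℕ × ℕ} {n : ℕ}
    (hp : p ∈ antidiagonal n) :
    eulerKernel b x p = (-1) ^ p.1 * n.choose p.1 * binomialTerm b x n := by
  obtain rfl := mem_antidiagonal.1 hp
  have : ((p.1 + p.2)! : ℂ) ≠ 0 := Nat.cast_ne_zero.2 (Nat.factorial_ne_zero _)
  rw [eulerKernel, binomialTerm, Nat.cast_add_choose]
  field_simp

lemma sum_antidiagonal_pow_mul_norm_eulerKernel (b x : ℂ) (ρ : ℝ) (n : ℕ) :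
    ∑ p ∈ antidiagonal n, ρ ^ p.1 * ‖eulerKernel b x p‖ =
      (ρ + 1) ^ n * ‖binomialTerm b x n‖ := by
  rw [(Commute.all ρ 1).add_pow', sum_mul]
  refine sum_congr rfl fun p hp => ?_
  rw [eulerKernel_eq_of_mem_antidiagonal b x hp]
  simp only [norm_mul, norm_pow, norm_neg, norm_one, one_pow, one_mul, mul_one, nsmul_eq_mul,
    Complex.norm_natCast]
  ring

lemma summable_pow_mul_norm_eulerKernel (b : ℂ) {x : ℂ} {ρ : ℝ} (hρ : 0 ≤ ρ)
    (hx : (ρ + 1) * ‖x‖ < 1) : Summable fun p : ℕ × ℕ => ρ ^ p.1 * ‖eulerKernel b x p‖ := by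
  rw [← HasAntidiagonal.sigmaAntidiagonalEquivProd.summable_iff,
    summable_sigma_of_nonneg fun _ => by simp only [Function.comp]; positivity]
  refine ⟨fun n => (hasSum_fintype _).summable, ?_⟩
  refine (summable_pow_mul_norm_binomialTerm b (by positivity) hx).congr fun n => ?_
  rw [tsum_fintype, ← sum_antidiagonal_pow_mul_norm_eulerKernel]
  exact (sum_coe_sort (antidiagonal n) fun p => ρ ^ p.1 * ‖eulerKernel b x p‖).symm

lemma hasSum_sum_antidiagonal_sum_antidiagonal {α : Type*} [AddCommGroup α] [UniformSpace α]
    [IsUniformAddGroup α] [CompleteSpace α] [T2Space α] {f : (ℕ × ℕ) × (ℕ × ℕ) → α} {s : α}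
    (hf : HasSum f s) :
    HasSum (fun N : ℕ × ℕ => ∑ p ∈ antidiagonal N.1, ∑ q ∈ antidiagonal N.2, f (p, q)) s := by
  refine (hf.tsum_fiberwise fun r => (r.1.1 + r.1.2, r.2.1 + r.2.2)).congr_fun fun N => ?_
  have hfiber : (fun r : (ℕ × ℕ) × (ℕ × ℕ) => (r.1.1 + r.1.2, r.2.1 + r.2.2)) ⁻¹' {N} =
      (antidiagonal N.1 ×ˢ antidiagonal N.2 : Finset _) := by
    ext
    simp [Prod.ext_iff]
  rw [hfiber, Finset.tsum_subtype', sum_product]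

lemma summable_mul_eulerKernel_mul_eulerKernel {v : ℕ → ℕ → ℂ} {C ρ σ : ℝ} (hρ : 0 ≤ ρ)
    (hσ : 0 ≤ σ) (hv : ∀ i j, ‖v i j‖ ≤ C * (ρ ^ i * σ ^ j)) (b b' : ℂ) {x y : ℂ}
    (hx : (ρ + 1) * ‖x‖ < 1) (hy : (σ + 1) * ‖y‖ < 1) :
    Summable fun r : (ℕ × ℕ) × (ℕ × ℕ) =>
      v r.1.1 r.2.1 * (eulerKernel b x r.1 * eulerKernel b' y r.2) := by
  have hmajorant := (summable_pow_mul_norm_eulerKernel b hρ hx).mul_of_nonneg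
    (summable_pow_mul_norm_eulerKernel b' hσ hy)
    (fun _ => by positivity) (fun _ => by positivity)
  refine .of_norm_bounded (hmajorant.mul_left C) fun r => ?_
  rw [norm_mul, norm_mul]
  calc ‖v r.1.1 r.2.1‖ * (‖eulerKernel b x r.1‖ * ‖eulerKernel b' y r.2‖)
      ≤ C * (ρ ^ r.1.1 * σ ^ r.2.1) * (‖eulerKernel b x r.1‖ * ‖eulerKernel b' y r.2‖) := by
        gcongr
        exact hv _ _
    _ = C * (ρ ^ r.1.1 * ‖eulerKernel b x r.1‖ * (σ ^ r.2.1 * ‖eulerKernel b' y r.2‖)) := by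
        ring

lemma sum_antidiagonal_mul_eulerKernel_mul_eulerKernel (v : ℕ → ℕ → ℂ) (b b' x y : ℂ)
    (m n : ℕ) :
    ∑ p ∈ antidiagonal m, ∑ q ∈ antidiagonal n,
        v p.1 q.1 * (eulerKernel b x p * eulerKernel b' y q) =
      binomialTransform₂ v m n * (binomialTerm b x m * binomialTerm b' y n) := by
  simp only [binomialTransform₂, sum_mul]
  refine sum_congr rfl fun p hp => sum_congr rfl fun q hq => ?_
  rw [eulerKernel_eq_of_mem_antidiagonal b x hp, eulerKernel_eq_of_mem_antidiagonal b' y hq]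
  ring

lemma hasSum_eulerKernel_mul_eulerKernel (b b' : ℂ) {x y : ℂ} (hx : ‖x‖ < 1) (hy : ‖y‖ < 1)
    (i j : ℕ) :
    HasSum (fun q : ℕ × ℕ => eulerKernel b x (i, q.1) * eulerKernel b' y (j, q.2))
      ((1 - x) ^ (-b) * (1 - y) ^ (-b') *
        (binomialTerm b (x / (x - 1)) i * binomialTerm b' (y / (y - 1)) j)) := by
  have hi := hasSum_eulerKernel b hx i
  have hj := hasSum_eulerKernel b' hy j
  rw [mul_mul_mul_comm]
  have hij := summable_mul_of_summable_norm hi.summable.norm hj.summable.norm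
  have hprod := hi.mul hj hij
  exact hprod

theorem tsum_binomialTransform₂_mul_binomialTerm {v : ℕ → ℕ → ℂ} {C ρ σ : ℝ} (hρ : 0 ≤ ρ)
    (hσ : 0 ≤ σ) (hv : ∀ i j, ‖v i j‖ ≤ C * (ρ ^ i * σ ^ j)) (b b' : ℂ) {x y : ℂ}
    (hx : (ρ + 1) * ‖x‖ < 1) (hy : (σ + 1) * ‖y‖ < 1) :
    ∑' p : ℕ × ℕ, binomialTransform₂ v p.1 p.2 * (binomialTerm b x p.1 * binomialTerm b' y p.2) =
      (1 - x) ^ (-b) * (1 - y) ^ (-b') *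
        ∑' p : ℕ × ℕ, v p.1 p.2 *
          (binomialTerm b (x / (x - 1)) p.1 * binomialTerm b' (y / (y - 1)) p.2) := by
  have hx1 : ‖x‖ < 1 := by nlinarith [norm_nonneg x]
  have hy1 : ‖y‖ < 1 := by nlinarith [norm_nonneg y]
  have hquad := (summable_mul_eulerKernel_mul_eulerKernel hρ hσ hv b b' hx hy).hasSum
  have hdiagonals := hasSum_sum_antidiagonal_sum_antidiagonal hquad
  have hrows := ((Equiv.prodProdProdComm ℕ ℕ ℕ ℕ).hasSum_iff.2 hquad).prod_fiberwise fun p =>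
    (hasSum_eulerKernel_mul_eulerKernel b b' hx1 hy1 p.1 p.2).mul_left (v p.1 p.2)
  simp only [sum_antidiagonal_mul_eulerKernel_mul_eulerKernel] at hdiagonals
  rw [hdiagonals.tsum_eq, ← hrows.tsum_eq, ← tsum_mul_left]
  simp only [mul_left_comm]

lemma appellF1_pfaff_transformation_of_norm_lt_half {c : ℂ} (hc : ∀ n : ℕ, c ≠ -(n : ℂ))
    (a b b' : ℂ) {x y : ℂ} (hx : ‖x‖ < 1 / 2) (hy : ‖y‖ < 1 / 2) :
    appellF1 a b b' c x y = (1 - x) ^ (-b) * (1 - y) ^ (-b') *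
      appellF1 (c - a) b b' c (x / (x - 1)) (y / (y - 1)) := by
  obtain ⟨ρ, hρ, hρx, hρy⟩ : ∃ ρ > 1, ρ * (‖x‖ / (1 - ‖x‖)) < 1 ∧ ρ * (‖y‖ / (1 - ‖y‖)) < 1 :=
    exists_one_lt_and_mul_lt_one ((div_lt_one (by linarith)).2 (by linarith))
      ((div_lt_one (by linarith)).2 (by linarith))
  rw [← mul_div_assoc, div_lt_one (by linarith)] at hρx hρy
  obtain ⟨C, hC⟩ := exists_norm_poch_div_poch_le hc (c - a) hρ
  simp only [appellF1_eq_tsum_appellTerm, appellTerm, ← binomialTransform₂_poch_div_poch hc a]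
  exact tsum_binomialTransform₂_mul_binomialTerm (by positivity) (by positivity)
    (fun i j => pow_add ρ i j ▸ hC (i + j)) b b' (by linarith) (by linarith)

/-- The common domain of `z` and `z / (z - 1)` as arguments of `appellF1`: the part of the open
unit disc that `z ↦ z / (z - 1)` maps into the open unit disc. -/
def pfaffDomain : Set ℂ := {z | ‖z‖ < 1 ∧ ‖z / (z - 1)‖ < 1}

lemma norm_div_sub_one_lt_one_iff {z : ℂ} (hz : z ≠ 1) : ‖z / (z - 1)‖ < 1 ↔ z.re < 1 / 2 := by
  rw [norm_div, div_lt_one (norm_pos_iff.2 (sub_ne_zero.2 hz)), Complex.norm_def,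
    Complex.norm_def, Real.sqrt_lt_sqrt_iff (Complex.normSq_nonneg _), Complex.normSq_sub]
  simp only [map_one, mul_one]
  constructor <;> intro h <;> linarith

lemma pfaffDomain_eq_ball_inter_halfSpace :
    pfaffDomain = ball 0 1 ∩ {z : ℂ | z.re < 1 / 2} := by
  ext z
  rw [Set.mem_inter_iff, mem_ball_zero_iff]
  refine and_congr_right fun hz => norm_div_sub_one_lt_one_iff ?_
  rintro rfl
  simp at hz

lemma isOpen_pfaffDomain : IsOpen pfaffDomain :=
  pfaffDomain_eq_ball_inter_halfSpace ▸
    isOpen_ball.inter (isOpen_lt Complex.continuous_re continuous_const)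

lemma convex_pfaffDomain : Convex ℝ pfaffDomain :=
  pfaffDomain_eq_ball_inter_halfSpace ▸ (convex_ball 0 1).inter (convex_halfSpace_re_lt _)

lemma zero_mem_pfaffDomain : (0 : ℂ) ∈ pfaffDomain := by simp [pfaffDomain]

lemma mapsTo_div_sub_one_pfaffDomain :
    Set.MapsTo (fun z => z / (z - 1)) pfaffDomain (ball 0 1) := fun _ hz =>
  mem_ball_zero_iff.2 hz.2

lemma one_sub_mem_slitPlane {z : ℂ} (hz : ‖z‖ < 1) : 1 - z ∈ Complex.slitPlane := by
  simpa [sub_eq_add_neg] using Complex.mem_slitPlane_of_norm_lt_one (z := -z) (by simpa using hz)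

lemma differentiableOn_appellF1_pfaff_rhs {c : ℂ} (hc : ∀ n : ℕ, c ≠ -(n : ℂ)) (a b b' : ℂ)
    {f g : ℂ → ℂ} {U : Set ℂ} (hU : IsOpen U) (hf : DifferentiableOn ℂ f U)
    (hg : DifferentiableOn ℂ g U) (hfU : Set.MapsTo f U pfaffDomain)
    (hgU : Set.MapsTo g U pfaffDomain) :
    DifferentiableOn ℂ (fun t => (1 - f t) ^ (-b) * (1 - g t) ^ (-b') *
      appellF1 (c - a) b b' c (f t / (f t - 1)) (g t / (g t - 1))) U := by
  have cpow {h : ℂ → ℂ} (hh : DifferentiableOn ℂ h U) (hhU : Set.MapsTo h U pfaffDomain)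
      (β : ℂ) : DifferentiableOn ℂ (fun t => (1 - h t) ^ (-β)) U :=
    (hh.const_sub 1).cpow_const fun t ht => one_sub_mem_slitPlane (hhU ht).1
  have moebius {h : ℂ → ℂ} (hh : DifferentiableOn ℂ h U) (hhU : Set.MapsTo h U pfaffDomain) :
      DifferentiableOn ℂ (fun t => h t / (h t - 1)) U :=
    hh.div (hh.sub_const 1) fun t ht h1 => by
      have := (hhU ht).1
      simp [sub_eq_zero.1 h1] at this
  exact ((cpow hf hfU b).mul (cpow hg hgU b')).mul
    (differentiableOn_appellF1_comp hc (c - a) b b' hU (moebius hf hfU) (moebius hg hgU)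
      (mapsTo_div_sub_one_pfaffDomain.comp hfU) (mapsTo_div_sub_one_pfaffDomain.comp hgU))

theorem appellF1_pfaff_transformation_general (a b b' c x y : ℂ)
    (hc : ∀ n : ℕ, c ≠ -(n : ℂ)) (hx : ‖x‖ < 1) (hy : ‖y‖ < 1)
    (hx' : ‖x / (x - 1)‖ < 1) (hy' : ‖y / (y - 1)‖ < 1) :
    appellF1 a b b' c x y = (1 - x) ^ (-b) * (1 - y) ^ (-b') *
      appellF1 (c - a) b b' c (x / (x - 1)) (y / (y - 1)) := by
  let U : Set ℂ := (fun t => t * x) ⁻¹' pfaffDomain ∩ (fun t => t * y) ⁻¹' pfaffDomain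
  have hU : IsOpen U := (isOpen_pfaffDomain.preimage (continuous_mul_const x)).inter
    (isOpen_pfaffDomain.preimage (continuous_mul_const y))
  have hU_conn : IsPreconnected U :=
    ((convex_pfaffDomain.linear_preimage (LinearMap.mulRight ℝ x)).inter
      (convex_pfaffDomain.linear_preimage (LinearMap.mulRight ℝ y))).isPreconnected
  have h0 : (0 : ℂ) ∈ U := by simp [U, zero_mem_pfaffDomain]
  have h1 : (1 : ℂ) ∈ U := by
    rw [Set.mem_inter_iff, Set.mem_preimage, Set.mem_preimage, one_mul, one_mul]
    exact ⟨⟨hx, hx'⟩, hy, hy'⟩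
  have hdiff (z : ℂ) : DifferentiableOn ℂ (fun t => t * z) U := by fun_prop
  have hlhs := differentiableOn_appellF1_comp hc a b b' hU (hdiff x) (hdiff y)
    (fun _ ht => mem_ball_zero_iff.2 ht.1.1) fun _ ht => mem_ball_zero_iff.2 ht.2.1
  have hrhs := differentiableOn_appellF1_pfaff_rhs hc a b b' hU (hdiff x) (hdiff y)
    (fun _ ht => ht.1) fun _ ht => ht.2
  have hsmall (z : ℂ) : ∀ᶠ t in 𝓝 0, ‖t * z‖ < 1 / 2 :=
    (continuous_mul_const z).norm.continuousAt.eventually_lt_const (by simp)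
  have hlocal := ((hsmall x).and (hsmall y)).mono fun t ht =>
    appellF1_pfaff_transformation_of_norm_lt_half hc a b b' ht.1 ht.2
  simpa using (hlhs.analyticOnNhd hU).eqOn_of_preconnected_of_eventuallyEq
    (hrhs.analyticOnNhd hU) hU_conn h0 hlocal h1

theorem appellF1_pfaff_transformation (a b b' c : ℂ) (x y : ℝ)
    (hc : ∀ n : ℕ, c ≠ -(n : ℂ))
    (hx : |x| < 1) (hy : |y| < 1)
    (hx' : |x / (x - 1)| < 1) (hy' : |y / (y - 1)| < 1) :
    appellF1 a b b' c x y =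
      ((1 : ℂ) - x) ^ (-b) * ((1 : ℂ) - y) ^ (-b') *
        appellF1 (c - a) b b' c ((x : ℂ) / (x - 1)) ((y : ℂ) / (y - 1)) := by
  apply appellF1_pfaff_transformation_general a b b' c x y hc <;>
    simpa only [← Complex.ofReal_one, ← Complex.ofReal_sub, ← Complex.ofReal_div,
      Complex.norm_real, Real.norm_eq_abs]
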